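/- Let l_1,…,l_n and r_1,…,r_n be d-dimensional bit vectors and let ℓ ≥ 1, p ∈ {0,1}, q ≥ 0 be integers. If no pair l_i, r_j is orthogonal, then the diameter of G = G_{L,R,ℓ,p,q} equals 4ℓ − 2p + q. -/

import Mathlib

namespace GraphOV

/-- Two bit vectors (functions into `Fin 2`) are orthogonal if in every coordinate
at least one of them is `0`. -/
def Orth {d : ℕ} (a b : Fin d → Fin 2) : Prop := ∀ k, a k = 0 ∨ b k = 0

/-- A system of internally disjoint paths joining exterior vertices from `E`:
for each path name `i : ι` we record its two endpoints and its length. -/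
structure PathSys (E : Type) (ι : Type) where
  src : ι → E
  dst : ι → E
  len : ι → ℕ

namespace PathSys

variable {E ι : Type}

/-- Endpoints of zero-length paths get identified. -/
def idRel (S : PathSys E ι) (a b : E) : Prop :=
  ∃ i, S.len i = 0 ∧ S.src i = a ∧ S.dst i = b

/-- Vertices of the glued graph: exterior vertices (up to identification) together
with, for each path of length `m`, fresh interior vertices at positions `1,…,m-1`. -/
def Vert (S : PathSys E ι) : Type :=
  Quot S.idRel ⊕ Σ i : ι, {t : ℕ // 0 < t ∧ t < S.len i}

/-- The vertex corresponding to an exterior vertex. -/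
def ext (S : PathSys E ι) (a : E) : S.Vert := Sum.inl (Quot.mk _ a)

/-- The `t`-th vertex on the path named `i` (for `0 ≤ t ≤ S.len i`). -/
def pt (S : PathSys E ι) (i : ι) (t : ℕ) : S.Vert :=
  if h : 0 < t ∧ t < S.len i then Sum.inr ⟨i, t, h⟩
  else if t = 0 then S.ext (S.src i) else S.ext (S.dst i)

/-- The glued graph: consecutive vertices on each path are adjacent. -/
def graph (S : PathSys E ι) : SimpleGraph S.Vert :=
  SimpleGraph.fromRel fun a b =>
    ∃ i t, t + 1 ≤ S.len i ∧ a = S.pt i t ∧ b = S.pt i (t + 1)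

/-- The set of vertices lying on the path named `i`. -/
def onPath (S : PathSys E ι) (i : ι) : Set S.Vert :=
  {v | ∃ t ≤ S.len i, v = S.pt i t}

/-- A walk in the glued graph contains the path named `i` entirely if all vertices of
that path occur consecutively (in forward or backward order) on the walk. -/
def WalkContainsPath (S : PathSys E ι) {x y : S.Vert} (W : S.graph.Walk x y) (i : ι) : Prop :=
  ∃ a, a + S.len i ≤ W.length ∧
    ((∀ t ≤ S.len i, W.getVert (a + t) = S.pt i t) ∨
     (∀ t ≤ S.len i, W.getVert (a + t) = S.pt i (S.len i - t)))

end PathSys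

/-- The exterior vertices of the graph `G_{L,R,ℓ,p,q}`. -/
inductive Ext (n d : ℕ) : Type
  | uL : Fin n → Ext n d
  | uR : Fin n → Ext n d
  | vL : Fin n → Ext n d
  | vR : Fin n → Ext n d
  | wL : Fin d → Ext n d
  | wR : Fin d → Ext n d
  | xL : Ext n d
  | xR : Ext n d
  | yL : Ext n d
  | yR : Ext n d

/-- Names for the paths of the graph `G_{L,R,ℓ,p,q}`. -/
inductive Idx (n d : ℕ) (l r : Fin n → Fin d → Fin 2) : Type
  | uvL : Fin n → Idx n d l r
  | uvR : Fin n → Idx n d l r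
  | vxL : Fin n → Idx n d l r
  | vxR : Fin n → Idx n d l r
  | vwL : (i : Fin n) → (k : Fin d) → l i k = 1 → Idx n d l r
  | vwR : (j : Fin n) → (k : Fin d) → r j k = 1 → Idx n d l r
  | ywL : Fin d → Idx n d l r
  | ywR : Fin d → Idx n d l r
  | ww : Fin d → Idx n d l r
  | xyL : Idx n d l r
  | xyR : Idx n d l r
  | yy : Idx n d l r

/-- The path system defining the graph `G_{L,R,ℓ,p,q}`. -/
def sys (n d : ℕ) (l r : Fin n → Fin d → Fin 2) (ℓ p q : ℕ) :
    PathSys (Ext n d) (Idx n d l r) where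
  src := fun i => match i with
    | .uvL i => .uL i
    | .uvR i => .uR i
    | .vxL i => .vL i
    | .vxR i => .vR i
    | .vwL i _ _ => .vL i
    | .vwR j _ _ => .vR j
    | .ywL _ => .yL
    | .ywR _ => .yR
    | .ww k => .wL k
    | .xyL => .xL
    | .xyR => .xR
    | .yy => .yL
  dst := fun i => match i with
    | .uvL i => .vL i
    | .uvR i => .vR i
    | .vxL _ => .xL
    | .vxR _ => .xR
    | .vwL _ k _ => .wL k
    | .vwR _ k _ => .wR k
    | .ywL k => .wL k
    | .ywR k => .wR k
    | .ww k => .wR k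
    | .xyL => .yL
    | .xyR => .yR
    | .yy => .yR
  len := fun i => match i with
    | .uvL _ => ℓ - p
    | .uvR _ => ℓ - p
    | .vxL _ => ℓ
    | .vxR _ => ℓ
    | .vwL _ _ _ => ℓ
    | .vwR _ _ _ => ℓ
    | .ywL _ => ℓ
    | .ywR _ => ℓ
    | .ww _ => q
    | .xyL => ℓ - p
    | .xyR => ℓ - p
    | .yy => p + q

/-- The set `P_i^L`. -/
def PL (n d : ℕ) (l r : Fin n → Fin d → Fin 2) (ℓ p q : ℕ) (i : Fin n) :
    Set (sys n d l r ℓ p q).Vert :=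
  (sys n d l r ℓ p q).onPath (.uvL i) ∪
    ((sys n d l r ℓ p q).onPath (.vxL i) \ {(sys n d l r ℓ p q).ext .xL}) ∪
    ⋃ (k : Fin d) (h : l i k = 1),
      ((sys n d l r ℓ p q).onPath (.vwL i k h) \ {(sys n d l r ℓ p q).ext (.wL k)})

/-- The set `P_j^R`. -/
def PR (n d : ℕ) (l r : Fin n → Fin d → Fin 2) (ℓ p q : ℕ) (j : Fin n) :
    Set (sys n d l r ℓ p q).Vert :=
  (sys n d l r ℓ p q).onPath (.uvR j) ∪
    ((sys n d l r ℓ p q).onPath (.vxR j) \ {(sys n d l r ℓ p q).ext .xR}) ∪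
    ⋃ (k : Fin d) (h : r j k = 1),
      ((sys n d l r ℓ p q).onPath (.vwR j k h) \ {(sys n d l r ℓ p q).ext (.wR k)})

/-- The set `V^L`. -/
def VL (n d : ℕ) (l r : Fin n → Fin d → Fin 2) (ℓ p q : ℕ) :
    Set (sys n d l r ℓ p q).Vert := ⋃ i : Fin n, PL n d l r ℓ p q i

/-- The set `V^R`. -/
def VR (n d : ℕ) (l r : Fin n → Fin d → Fin 2) (ℓ p q : ℕ) :
    Set (sys n d l r ℓ p q).Vert := ⋃ j : Fin n, PR n d l r ℓ p q j

/-- The set `V^M` of all remaining vertices. -/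
def VM (n d : ℕ) (l r : Fin n → Fin d → Fin 2) (ℓ p q : ℕ) :
    Set (sys n d l r ℓ p q).Vert := (VL n d l r ℓ p q ∪ VR n d l r ℓ p q)ᶜ


/-- `Reach G a b m`: there is a walk of length at most `m`. -/
def Reach {V : Type} (G : SimpleGraph V) (a b : V) (m : ℕ) : Prop :=
  ∃ w : G.Walk a b, w.length ≤ m

theorem Reach.rfl' {V : Type} {G : SimpleGraph V} (a : V) : Reach G a a 0 :=
  ⟨SimpleGraph.Walk.nil, by simp⟩

theorem Reach.trans {V : Type} {G : SimpleGraph V} {a b c : V} {m k : ℕ}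
    (h : Reach G a b m) (h' : Reach G b c k) : Reach G a c (m + k) := by
  obtain ⟨w, hw⟩ := h
  obtain ⟨w', hw'⟩ := h'
  exact ⟨w.append w', by rw [SimpleGraph.Walk.length_append]; omega⟩

theorem Reach.symm {V : Type} {G : SimpleGraph V} {a b : V} {m : ℕ}
    (h : Reach G a b m) : Reach G b a m := by
  obtain ⟨w, hw⟩ := h
  exact ⟨w.reverse, by rw [SimpleGraph.Walk.length_reverse]; omega⟩

theorem Reach.mono {V : Type} {G : SimpleGraph V} {a b : V} {m k : ℕ}
    (h : Reach G a b m) (hk : m ≤ k) : Reach G a b k := by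
  obtain ⟨w, hw⟩ := h
  exact ⟨w, by omega⟩

namespace PathSys

variable {E ι : Type}

theorem pt_zero (S : PathSys E ι) (i : ι) : S.pt i 0 = S.ext (S.src i) := by
  simp [pt]

theorem pt_len (S : PathSys E ι) (i : ι) : S.pt i (S.len i) = S.ext (S.dst i) := by
  by_cases h : S.len i = 0
  · rw [h, pt_zero]
    exact congrArg Sum.inl (Quot.sound ⟨i, h, rfl, rfl⟩)
  · simp [pt, h]

theorem pt_mid (S : PathSys E ι) (i : ι) (t : ℕ) (h : 0 < t ∧ t < S.len i) :
    S.pt i t = Sum.inr ⟨i, t, h⟩ := dif_pos h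

theorem reach_step (S : PathSys E ι) (i : ι) (t : ℕ) (h : t + 1 ≤ S.len i) :
    Reach S.graph (S.pt i t) (S.pt i (t + 1)) 1 := by
  by_cases he : S.pt i t = S.pt i (t + 1)
  · rw [← he]; exact (Reach.rfl' _).mono (by omega)
  · have ha : S.graph.Adj (S.pt i t) (S.pt i (t + 1)) := by
      rw [graph, SimpleGraph.fromRel_adj]
      exact ⟨he, Or.inl ⟨i, t, h, rfl, rfl⟩⟩
    exact ⟨ha.toWalk, by simp⟩

theorem reach_path (S : PathSys E ι) (i : ι) (s m : ℕ) (h : s + m ≤ S.len i) :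
    Reach S.graph (S.pt i s) (S.pt i (s + m)) m := by
  induction m with
  | zero => exact Reach.rfl' _
  | succ m ih => exact (ih (by omega)).trans (S.reach_step i (s + m) (by omega))

theorem reach_src (S : PathSys E ι) (i : ι) (s : ℕ) (h : s ≤ S.len i) :
    Reach S.graph (S.pt i s) (S.ext (S.src i)) s := by
  have := S.reach_path i 0 s (by omega)
  rw [pt_zero, Nat.zero_add] at this
  exact this.symm

theorem reach_dst (S : PathSys E ι) (i : ι) (s : ℕ) (h : s ≤ S.len i) :
    Reach S.graph (S.pt i s) (S.ext (S.dst i)) (S.len i - s) := by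
  have := S.reach_path i s (S.len i - s) (by omega)
  rwa [Nat.add_sub_cancel' h, pt_len] at this

theorem reach_edge (S : PathSys E ι) (i : ι) :
    Reach S.graph (S.ext (S.src i)) (S.ext (S.dst i)) (S.len i) := by
  have := S.reach_dst i 0 (by omega)
  rwa [pt_zero] at this

theorem reach_pair (S : PathSys E ι) (D : E → E → ℕ) (M : ℕ)
    (hD : ∀ a b, Reach S.graph (S.ext a) (S.ext b) (D a b)) (i j : ι) (s t : ℕ)
    (hs : s ≤ S.len i) (ht : t ≤ S.len j)
    (h : s + D (S.src i) (S.src j) + t ≤ M ∨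
      s + D (S.src i) (S.dst j) + (S.len j - t) ≤ M ∨
      (S.len i - s) + D (S.dst i) (S.src j) + t ≤ M ∨
      (S.len i - s) + D (S.dst i) (S.dst j) + (S.len j - t) ≤ M) :
    Reach S.graph (S.pt i s) (S.pt j t) M := by
  rcases h with h | h | h | h
  · exact (((S.reach_src i s hs).trans (hD _ _)).trans (S.reach_src j t ht).symm).mono h
  · exact (((S.reach_src i s hs).trans (hD _ _)).trans (S.reach_dst j t ht).symm).mono h
  · exact (((S.reach_dst i s hs).trans (hD _ _)).trans (S.reach_src j t ht).symm).mono h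
  · exact (((S.reach_dst i s hs).trans (hD _ _)).trans (S.reach_dst j t ht).symm).mono h

/-- Lipschitz extension of a potential. -/
def pot (S : PathSys E ι) (g : E → ℕ)
    (hg : ∀ i, g (S.src i) ≤ g (S.dst i) + S.len i ∧ g (S.dst i) ≤ g (S.src i) + S.len i) :
    S.Vert → ℕ
  | .inl a => Quot.lift g (by
      rintro a b ⟨i, h0, rfl, rfl⟩
      have := hg i
      omega) a
  | .inr x => min (g (S.src x.1) + x.2.1) (g (S.dst x.1) + (S.len x.1 - x.2.1))

theorem pot_ext (S : PathSys E ι) (g : E → ℕ) (hg) (a : E) : S.pot g hg (S.ext a) = g a := rfl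

theorem pot_pt (S : PathSys E ι) (g : E → ℕ) (hg) (i : ι) (t : ℕ) (ht : t ≤ S.len i) :
    S.pot g hg (S.pt i t) = min (g (S.src i) + t) (g (S.dst i) + (S.len i - t)) := by
  have := hg i
  rcases Nat.eq_zero_or_pos t with rfl | h0
  · rw [pt_zero, pot_ext]; omega
  · rcases Nat.eq_or_lt_of_le ht with rfl | h1
    · rw [pt_len, pot_ext]; omega
    · rw [S.pt_mid i t ⟨h0, h1⟩]; rfl

theorem pot_adj (S : PathSys E ι) (g : E → ℕ) (hg) (a b : S.Vert) (h : S.graph.Adj a b) :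
    S.pot g hg b ≤ S.pot g hg a + 1 := by
  rw [graph, SimpleGraph.fromRel_adj] at h
  rcases h.2 with ⟨i, t, ht, rfl, rfl⟩ | ⟨i, t, ht, rfl, rfl⟩ <;>
  · rw [pot_pt _ _ _ _ _ ht, pot_pt _ _ _ _ _ (by omega)]
    omega

theorem pot_walk (S : PathSys E ι) (g : E → ℕ) (hg) (a b : S.Vert) (w : S.graph.Walk a b) :
    S.pot g hg b ≤ S.pot g hg a + w.length := by
  induction w with
  | nil => simp
  | cons h w ih =>
    have := S.pot_adj g hg _ _ h
    rw [SimpleGraph.Walk.length_cons]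
    omega

end PathSys

/-- The potential. -/
def gpot (n d ℓ p q : ℕ) : Ext n d → ℕ
  | .uL _ => 0
  | .vL _ => ℓ - p
  | .wL _ => 2 * ℓ - p
  | .xL => 2 * ℓ - p
  | .yL => 2 * ℓ - p
  | .wR _ => 2 * ℓ - p + q
  | .xR => 2 * ℓ - p + q
  | .yR => 2 * ℓ - p + q
  | .vR _ => 3 * ℓ - p + q
  | .uR _ => 4 * ℓ - 2 * p + q

/-- Kinds of hubs: `0 = v`, `1 = w`, `2 = x`, `3 = y`. -/
inductive Kd
  | v | w | x | y

/-- same-side table -/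
def tS (ℓ p : ℕ) : Kd → Kd → ℕ
  | .v, .v => 2 * ℓ
  | .v, .w => 3 * ℓ - p
  | .v, .x => ℓ
  | .v, .y => 2 * ℓ - p
  | .w, .v => 3 * ℓ - p
  | .w, .w => 2 * ℓ
  | .w, .x => 2 * ℓ - p
  | .w, .y => ℓ
  | .x, .v => ℓ
  | .x, .w => 2 * ℓ - p
  | .x, .x => 0
  | .x, .y => ℓ - p
  | .y, .v => 2 * ℓ - p
  | .y, .w => ℓ
  | .y, .x => ℓ - p
  | .y, .y => 0

/-- opposite-side table -/
def tO (ℓ p q : ℕ) : Kd → Kd → ℕ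
  | .v, .v => 2 * ℓ + q
  | .v, .w => 3 * ℓ - p + q
  | .v, .x => 3 * ℓ - p + q
  | .v, .y => 2 * ℓ + q
  | .w, .v => 3 * ℓ - p + q
  | .w, .w => 2 * ℓ + q
  | .w, .x => 2 * ℓ - p + q
  | .w, .y => ℓ + q
  | .x, .v => 3 * ℓ - p + q
  | .x, .w => 2 * ℓ - p + q
  | .x, .x => 2 * ℓ - p + q
  | .x, .y => ℓ + q
  | .y, .v => 2 * ℓ + q
  | .y, .w => ℓ + q
  | .y, .x => ℓ + q
  | .y, .y => p + q

/-- hub of an exterior vertex -/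
def hub {n d : ℕ} : Ext n d → Ext n d
  | .uL i => .vL i
  | .uR i => .vR i
  | a => a

/-- kind -/
def kd {n d : ℕ} : Ext n d → Kd
  | .uL _ => .v
  | .uR _ => .v
  | .vL _ => .v
  | .vR _ => .v
  | .wL _ => .w
  | .wR _ => .w
  | .xL => .x
  | .xR => .x
  | .yL => .y
  | .yR => .y

/-- side -/
def sd {n d : ℕ} : Ext n d → Bool
  | .uL _ => true
  | .uR _ => false
  | .vL _ => true
  | .vR _ => false
  | .wL _ => true
  | .wR _ => false
  | .xL => true
  | .xR => false
  | .yL => true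
  | .yR => false

/-- distance to hub -/
def ex {n d : ℕ} (ℓ p : ℕ) : Ext n d → ℕ
  | .uL _ => ℓ - p
  | .uR _ => ℓ - p
  | _ => 0

/-- uniform upper bound for hub distances -/
def D8 {n d : ℕ} (ℓ p q : ℕ) (a b : Ext n d) : ℕ :=
  if sd a = sd b then tS ℓ p (kd a) (kd b) else tO ℓ p q (kd a) (kd b)

/-- uniform upper bound for exterior distances -/
def DD {n d : ℕ} (ℓ p q : ℕ) (a b : Ext n d) : ℕ :=
  ex ℓ p a + D8 ℓ p q a b + ex ℓ p b

theorem exists_common {d : ℕ} {a b : Fin d → Fin 2} (h : ¬ Orth a b) :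
    ∃ k, a k = 1 ∧ b k = 1 := by
  unfold Orth at h
  push Not at h
  obtain ⟨k, h1, h2⟩ := h
  exact ⟨k, by omega, by omega⟩

theorem reach_hub (n d ℓ p q : ℕ) (hℓ : 1 ≤ ℓ) (hp : p ≤ 1) (l r : Fin n → Fin d → Fin 2)
    (hno : ∀ i j, ¬ Orth (l i) (r j)) (a b : Ext n d) :
    Reach (sys n d l r ℓ p q).graph ((sys n d l r ℓ p q).ext (hub a))
      ((sys n d l r ℓ p q).ext (hub b)) (D8 ℓ p q a b) := by
  set S := sys n d l r ℓ p q with hS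
  have vxL : ∀ i, Reach S.graph (S.ext (.vL i)) (S.ext .xL) ℓ := fun i => S.reach_edge (.vxL i)
  have vxR : ∀ i, Reach S.graph (S.ext (.vR i)) (S.ext .xR) ℓ := fun i => S.reach_edge (.vxR i)
  have ywL : ∀ k, Reach S.graph (S.ext .yL) (S.ext (.wL k)) ℓ := fun i => S.reach_edge (.ywL i)
  have ywR : ∀ k, Reach S.graph (S.ext .yR) (S.ext (.wR k)) ℓ := fun i => S.reach_edge (.ywR i)
  have ww : ∀ k, Reach S.graph (S.ext (.wL k)) (S.ext (.wR k)) q := fun i => S.reach_edge (.ww i)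
  have xyL : Reach S.graph (S.ext .xL) (S.ext .yL) (ℓ - p) := S.reach_edge .xyL
  have xyR : Reach S.graph (S.ext .xR) (S.ext .yR) (ℓ - p) := S.reach_edge .xyR
  have yy : Reach S.graph (S.ext .yL) (S.ext .yR) (p + q) := S.reach_edge .yy
  have vvO : ∀ i j, Reach S.graph (S.ext (.vL i)) (S.ext (.vR j)) (2 * ℓ + q) := by
    intro i j
    obtain ⟨k, h1, h2⟩ := exists_common (hno i j)
    have e1 : Reach S.graph (S.ext (.vL i)) (S.ext (.wL k)) ℓ := S.reach_edge (.vwL i k h1)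
    have e2 : Reach S.graph (S.ext (.vR j)) (S.ext (.wR k)) ℓ := S.reach_edge (.vwR j k h2)
    exact ((e1.trans (ww k)).trans e2.symm).mono (by omega)
  have svvL : ∀ i j, Reach S.graph (S.ext (.vL i)) (S.ext (.vL j)) (2 * ℓ) :=
    fun i j => (((vxL i).trans (vxL j).symm)).mono (by omega)
  have svwL : ∀ i j, Reach S.graph (S.ext (.vL i)) (S.ext (.wL j)) (3 * ℓ - p) :=
    fun i j => ((((vxL i).trans xyL).trans (ywL j))).mono (by omega)
  have svxL : ∀ i, Reach S.graph (S.ext (.vL i)) (S.ext (.xL)) (ℓ) :=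
    fun i => ((vxL i)).mono (by omega)
  have svyL : ∀ i, Reach S.graph (S.ext (.vL i)) (S.ext (.yL)) (2 * ℓ - p) :=
    fun i => (((vxL i).trans xyL)).mono (by omega)
  have swwL : ∀ i j, Reach S.graph (S.ext (.wL i)) (S.ext (.wL j)) (2 * ℓ) :=
    fun i j => (((ywL i).symm.trans (ywL j))).mono (by omega)
  have swxL : ∀ i, Reach S.graph (S.ext (.wL i)) (S.ext (.xL)) (2 * ℓ - p) :=
    fun i => (((ywL i).symm.trans xyL.symm)).mono (by omega)
  have swyL : ∀ i, Reach S.graph (S.ext (.wL i)) (S.ext (.yL)) (ℓ) :=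
    fun i => ((ywL i).symm).mono (by omega)
  have sxxL : Reach S.graph (S.ext (.xL)) (S.ext (.xL)) (0) :=
    (Reach.rfl' _).mono (by omega)
  have sxyL : Reach S.graph (S.ext (.xL)) (S.ext (.yL)) (ℓ - p) :=
    (xyL).mono (by omega)
  have syyL : Reach S.graph (S.ext (.yL)) (S.ext (.yL)) (0) :=
    (Reach.rfl' _).mono (by omega)
  have svvR : ∀ i j, Reach S.graph (S.ext (.vR i)) (S.ext (.vR j)) (2 * ℓ) :=
    fun i j => (((vxR i).trans (vxR j).symm)).mono (by omega)
  have svwR : ∀ i j, Reach S.graph (S.ext (.vR i)) (S.ext (.wR j)) (3 * ℓ - p) :=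
    fun i j => ((((vxR i).trans xyR).trans (ywR j))).mono (by omega)
  have svxR : ∀ i, Reach S.graph (S.ext (.vR i)) (S.ext (.xR)) (ℓ) :=
    fun i => ((vxR i)).mono (by omega)
  have svyR : ∀ i, Reach S.graph (S.ext (.vR i)) (S.ext (.yR)) (2 * ℓ - p) :=
    fun i => (((vxR i).trans xyR)).mono (by omega)
  have swwR : ∀ i j, Reach S.graph (S.ext (.wR i)) (S.ext (.wR j)) (2 * ℓ) :=
    fun i j => (((ywR i).symm.trans (ywR j))).mono (by omega)
  have swxR : ∀ i, Reach S.graph (S.ext (.wR i)) (S.ext (.xR)) (2 * ℓ - p) :=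
    fun i => (((ywR i).symm.trans xyR.symm)).mono (by omega)
  have swyR : ∀ i, Reach S.graph (S.ext (.wR i)) (S.ext (.yR)) (ℓ) :=
    fun i => ((ywR i).symm).mono (by omega)
  have sxxR : Reach S.graph (S.ext (.xR)) (S.ext (.xR)) (0) :=
    (Reach.rfl' _).mono (by omega)
  have sxyR : Reach S.graph (S.ext (.xR)) (S.ext (.yR)) (ℓ - p) :=
    (xyR).mono (by omega)
  have syyR : Reach S.graph (S.ext (.yR)) (S.ext (.yR)) (0) :=
    (Reach.rfl' _).mono (by omega)
  have ovw : ∀ i j, Reach S.graph (S.ext (.vL i)) (S.ext (.wR j)) (3 * ℓ - p + q) :=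
    fun i j => (((((vxL i).trans xyL).trans (ywL j)).trans (ww j))).mono (by omega)
  have owv : ∀ i j, Reach S.graph (S.ext (.wL i)) (S.ext (.vR j)) (3 * ℓ - p + q) :=
    fun i j => (((((ww i).trans (ywR i).symm).trans xyR.symm).trans (vxR j).symm)).mono (by omega)
  have ovx : ∀ i, Reach S.graph (S.ext (.vL i)) (S.ext (.xR)) (3 * ℓ - p + q) :=
    fun i => (((((vxL i).trans xyL).trans yy).trans xyR.symm)).mono (by omega)
  have oxv : ∀ j, Reach S.graph (S.ext (.xL)) (S.ext (.vR j)) (3 * ℓ - p + q) :=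
    fun j => ((((xyL.trans yy).trans xyR.symm).trans (vxR j).symm)).mono (by omega)
  have ovy : ∀ i, Reach S.graph (S.ext (.vL i)) (S.ext (.yR)) (2 * ℓ + q) :=
    fun i => ((((vxL i).trans xyL).trans yy)).mono (by omega)
  have oyv : ∀ j, Reach S.graph (S.ext (.yL)) (S.ext (.vR j)) (2 * ℓ + q) :=
    fun j => (((yy.trans xyR.symm).trans (vxR j).symm)).mono (by omega)
  have oww : ∀ i j, Reach S.graph (S.ext (.wL i)) (S.ext (.wR j)) (2 * ℓ + q) :=
    fun i j => ((((ww i).trans (ywR i).symm).trans (ywR j))).mono (by omega)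
  have owx : ∀ i, Reach S.graph (S.ext (.wL i)) (S.ext (.xR)) (2 * ℓ - p + q) :=
    fun i => ((((ww i).trans (ywR i).symm).trans xyR.symm)).mono (by omega)
  have oxw : ∀ j, Reach S.graph (S.ext (.xL)) (S.ext (.wR j)) (2 * ℓ - p + q) :=
    fun j => (((xyL.trans (ywL j)).trans (ww j))).mono (by omega)
  have owy : ∀ i, Reach S.graph (S.ext (.wL i)) (S.ext (.yR)) (ℓ + q) :=
    fun i => (((ww i).trans (ywR i).symm)).mono (by omega)
  have oyw : ∀ j, Reach S.graph (S.ext (.yL)) (S.ext (.wR j)) (ℓ + q) :=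
    fun j => (((ywL j).trans (ww j))).mono (by omega)
  have oxx : Reach S.graph (S.ext (.xL)) (S.ext (.xR)) (2 * ℓ - p + q) :=
    (((xyL.trans yy).trans xyR.symm)).mono (by omega)
  have oxy : Reach S.graph (S.ext (.xL)) (S.ext (.yR)) (ℓ + q) :=
    ((xyL.trans yy)).mono (by omega)
  have oyx : Reach S.graph (S.ext (.yL)) (S.ext (.xR)) (ℓ + q) :=
    ((yy.trans xyR.symm)).mono (by omega)
  have oyy : Reach S.graph (S.ext (.yL)) (S.ext (.yR)) (p + q) :=
    (yy).mono (by omega)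
  cases a <;> cases b <;> simp only [hub, D8, sd, kd, tS, tO, if_true, if_false, reduceCtorEq, Bool.false_eq_true, Bool.true_eq_false] <;>
    first
    | exact svvL _ _
    | exact svwL _ _
    | exact svxL _
    | exact svyL _
    | exact swwL _ _
    | exact swxL _
    | exact swyL _
    | exact sxxL
    | exact sxyL
    | exact syyL
    | exact svvR _ _
    | exact svwR _ _
    | exact svxR _
    | exact svyR _
    | exact swwR _ _
    | exact swxR _
    | exact swyR _
    | exact sxxR
    | exact sxyR
    | exact syyR
    | exact ovw _ _
    | exact owv _ _
    | exact ovx _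
    | exact oxv _
    | exact ovy _
    | exact oyv _
    | exact oww _ _
    | exact owx _
    | exact oxw _
    | exact owy _
    | exact oyw _
    | exact oxx
    | exact oxy
    | exact oyx
    | exact oyy
    | exact vvO _ _
    | exact (svvL _ _).symm
    | exact (svwL _ _).symm
    | exact (svxL _).symm
    | exact (svyL _).symm
    | exact (swwL _ _).symm
    | exact (swxL _).symm
    | exact (swyL _).symm
    | exact sxxL.symm
    | exact sxyL.symm
    | exact syyL.symm
    | exact (svvR _ _).symm
    | exact (svwR _ _).symm
    | exact (svxR _).symm
    | exact (svyR _).symm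
    | exact (swwR _ _).symm
    | exact (swxR _).symm
    | exact (swyR _).symm
    | exact sxxR.symm
    | exact sxyR.symm
    | exact syyR.symm
    | exact (ovw _ _).symm
    | exact (owv _ _).symm
    | exact (ovx _).symm
    | exact (oxv _).symm
    | exact (ovy _).symm
    | exact (oyv _).symm
    | exact (oww _ _).symm
    | exact (owx _).symm
    | exact (oxw _).symm
    | exact (owy _).symm
    | exact (oyw _).symm
    | exact oxx.symm
    | exact oxy.symm
    | exact oyx.symm
    | exact oyy.symm
    | exact (vvO _ _).symm

theorem reach_DD (n d ℓ p q : ℕ) (hℓ : 1 ≤ ℓ) (hp : p ≤ 1) (l r : Fin n → Fin d → Fin 2)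
    (hno : ∀ i j, ¬ Orth (l i) (r j)) (a b : Ext n d) :
    Reach (sys n d l r ℓ p q).graph ((sys n d l r ℓ p q).ext a)
      ((sys n d l r ℓ p q).ext b) (DD ℓ p q a b) := by
  have hx : ∀ a : Ext n d, Reach (sys n d l r ℓ p q).graph ((sys n d l r ℓ p q).ext a)
      ((sys n d l r ℓ p q).ext (hub a)) (ex ℓ p a) := by
    intro a
    cases a with
    | uL i => exact (sys n d l r ℓ p q).reach_edge (.uvL i)
    | uR i => exact (sys n d l r ℓ p q).reach_edge (.uvR i)
    | _ => exact Reach.rfl' _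
  exact ((hx a).trans (reach_hub n d ℓ p q hℓ hp l r hno a b)).trans (hx b).symm

theorem exists_pt (n d ℓ p q : ℕ) (l r : Fin n → Fin d → Fin 2) (z : (sys n d l r ℓ p q).Vert) :
    ∃ i t, t ≤ (sys n d l r ℓ p q).len i ∧ z = (sys n d l r ℓ p q).pt i t := by
  let S := sys n d l r ℓ p q
  have hs : ∀ i, ∃ i' t, t ≤ S.len i' ∧ S.ext (S.src i) = S.pt i' t :=
    fun i => ⟨i, 0, Nat.zero_le _, (S.pt_zero i).symm⟩
  have hd : ∀ i, ∃ i' t, t ≤ S.len i' ∧ S.ext (S.dst i) = S.pt i' t :=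
    fun i => ⟨i, S.len i, le_rfl, (S.pt_len i).symm⟩
  rcases z with a | ⟨i, t, h0, h1⟩
  · induction a using Quot.ind with
    | mk a =>
      cases a with
      | uL i => exact hs (.uvL i)
      | uR i => exact hs (.uvR i)
      | vL i => exact hd (.uvL i)
      | vR i => exact hd (.uvR i)
      | wL k => exact hd (.ywL k)
      | wR k => exact hd (.ywR k)
      | xL => exact hs .xyL
      | xR => exact hs .xyR
      | yL => exact hd .xyL
      | yR => exact hd .xyR
  · exact ⟨i, t, h1.le, (PathSys.pt_mid _ i t ⟨h0, h1⟩).symm⟩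

set_option maxHeartbeats 4000000 in
theorem reach_all (n d ℓ p q : ℕ) (hℓ : 1 ≤ ℓ) (hp : p ≤ 1) (l r : Fin n → Fin d → Fin 2)
    (hno : ∀ i j, ¬ Orth (l i) (r j)) (a b : (sys n d l r ℓ p q).Vert) :
    Reach (sys n d l r ℓ p q).graph a b (4 * ℓ - 2 * p + q) := by
  obtain ⟨i, s, hs, rfl⟩ := exists_pt n d ℓ p q l r a
  obtain ⟨j, t, ht, rfl⟩ := exists_pt n d ℓ p q l r b
  refine (sys n d l r ℓ p q).reach_pair (DD ℓ p q) _ (reach_DD n d ℓ p q hℓ hp l r hno)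
    i j s t hs ht ?_
  cases i <;> cases j <;>
    simp only [sys, DD, ex, D8, sd, kd, tS, tO, if_true, if_false, reduceCtorEq, Bool.false_eq_true,
      Bool.true_eq_false] at hs ht ⊢ <;> omega

theorem diameter_of_G_no_orth_pair (n d ℓ p q : ℕ) (hn : 1 ≤ n) (hd : 1 ≤ d)
    (hℓ : 1 ≤ ℓ) (hp : p ≤ 1) (l r : Fin n → Fin d → Fin 2)
    (hno : ∀ i j, ¬ Orth (l i) (r j)) :
    (sys n d l r ℓ p q).graph.diam = 4 * ℓ - 2 * p + q := by
  set S := sys n d l r ℓ p q with hS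
  have hg : ∀ i, gpot n d ℓ p q (S.src i) ≤ gpot n d ℓ p q (S.dst i) + S.len i ∧
      gpot n d ℓ p q (S.dst i) ≤ gpot n d ℓ p q (S.src i) + S.len i := by
    intro i
    cases i <;> simp only [hS, sys, gpot] <;> omega
  have h : S.graph.ediam = ((4 * ℓ - 2 * p + q : ℕ) : ℕ∞) := by
    apply le_antisymm
    · apply SimpleGraph.ediam_le_of_edist_le
      intro a b
      obtain ⟨w, hw⟩ := reach_all n d ℓ p q hℓ hp l r hno a b
      exact (SimpleGraph.Walk.edist_le w).trans (by exact_mod_cast hw)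
    · refine le_trans ?_ (SimpleGraph.edist_le_ediam
        (u := S.ext (.uL ⟨0, hn⟩)) (v := S.ext (.uR ⟨0, hn⟩)))
      refine le_iInf fun w => ?_
      have := S.pot_walk _ hg _ _ w
      rw [S.pot_ext, S.pot_ext] at this
      simp only [gpot] at this
      exact_mod_cast (by omega)
  rw [SimpleGraph.diam, h]
  rfl

end GraphOV
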